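/- The real-linear map A₀ : ℍ₀ → M₂(𝒜) sending p = p₀1 + ip₁I + p₂J + ip₃K (p₀,…,p₃ ∈ 𝒜) to the matrix [[p₀ − σp₁, p₂ − σp₃], [−p₂ − σp₃, p₀ + σp₁]] is an isomorphism of real algebras, and for every p ∈ ℍ₀ one has H(p, p) = det A₀(p) and A₀(\widehat{p̄}) = A₀(p)*, where p̄ denotes quaternionic conjugation and B* denotes the conjugate transpose of B ∈ M₂(𝒜). -/

import Mathlib

noncomputable section

/-! ### The algebra `𝒜` of Lorentz (split-complex) numbers.

We realize `𝒜` (the real algebra with basis `{1, σ}`, `σ² = 1`) in split coordinates: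
`(x, y) : ℝ × ℝ` represents `u + σ v` with `x = u + v`, `y = u - v`.  Multiplication is then
componentwise, `1 = (1,1)`, and `σ = (1, -1)` satisfies `σ² = 1`. -/

abbrev LorentzA : Type := ℝ × ℝ

/-- The element `σ ∈ 𝒜`, with `σ² = 1`, `σ ∉ ℝ·1`. -/
def sA : LorentzA := (1, -1)

/-- The element `u + σ v` of `𝒜`. -/
def mkA (u v : ℝ) : LorentzA := (u + v, u - v)

/-- The inclusion `ℝ ⊆ 𝒜`, `t ↦ t·1`. -/
def toA (t : ℝ) : LorentzA := (t, t)

/-- Conjugation of `𝒜`: `u + σ v ↦ u - σ v` (the swap, in split coordinates). -/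
def conjA (a : LorentzA) : LorentzA := (a.2, a.1)

/-- `|a|² := a·â = u² - v²`, as a real number (so that `a * conjA a = toA (nsqA a)`). -/
def nsqA (a : LorentzA) : ℝ := a.1 * a.2

/-- The real part of `a = u + σ v ∈ 𝒜`, namely `u`. -/
def ReA (a : LorentzA) : ℝ := (a.1 + a.2) / 2

/-- The imaginary part of `a = u + σ v ∈ 𝒜`, namely `v`. -/
def ImA (a : LorentzA) : ℝ := (a.1 - a.2) / 2

/-- The idempotent `(1 + σ)/2` of `𝒜`. -/
def eP : LorentzA := (1 + sA) / 2

/-- The idempotent `(1 - σ)/2` of `𝒜`. -/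
def eM : LorentzA := (1 - sA) / 2

/-! ### Derivatives of maps `ℝ² → 𝒜` and `ℝ² → ℝ`. -/

/-- `∂_u f`. -/
def duA (f : ℝ × ℝ → LorentzA) (x : ℝ × ℝ) : LorentzA := fderiv ℝ f x (1, 0)

/-- `∂_v f`. -/
def dvA (f : ℝ × ℝ → LorentzA) (x : ℝ × ℝ) : LorentzA := fderiv ℝ f x (0, 1)

/-- `∂_a f = ½ (∂_u f + σ ∂_v f)`. -/
def Da (f : ℝ × ℝ → LorentzA) (x : ℝ × ℝ) : LorentzA := ((2:ℝ)⁻¹) • (duA f x + sA * dvA f x)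

/-- `∂_â f = ½ (∂_u f - σ ∂_v f)`.  A map is conformal iff `∂_â f = 0`. -/
def Dahat (f : ℝ × ℝ → LorentzA) (x : ℝ × ℝ) : LorentzA := ((2:ℝ)⁻¹) • (duA f x - sA * dvA f x)

/-- `∂_u f` for real-valued `f`. -/
def duR (f : ℝ × ℝ → ℝ) (x : ℝ × ℝ) : ℝ := fderiv ℝ f x (1, 0)

/-- `∂_v f` for real-valued `f`. -/
def dvR (f : ℝ × ℝ → ℝ) (x : ℝ × ℝ) : ℝ := fderiv ℝ f x (0, 1)

/-- `∂²f/∂u²`. -/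
def duuR (f : ℝ × ℝ → ℝ) (x : ℝ × ℝ) : ℝ := fderiv ℝ (fun y => fderiv ℝ f y (1, 0)) x (1, 0)

/-- `∂²f/∂v²`. -/
def dvvR (f : ℝ × ℝ → ℝ) (x : ℝ × ℝ) : ℝ := fderiv ℝ (fun y => fderiv ℝ f y (0, 1)) x (0, 1)

/-- The wave operator `□ f = -∂²f/∂u² + ∂²f/∂v²`. -/
def boxR (f : ℝ × ℝ → ℝ) (x : ℝ × ℝ) : ℝ := -duuR f x + dvvR f x

/-! ### 2×2 matrices over `𝒜`. -/

abbrev M2A := Matrix (Fin 2) (Fin 2) LorentzA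

/-- The conjugate transpose `B*` of `B ∈ M₂(𝒜)`. -/
def ctrans (B : M2A) : M2A := (B.map conjA).transpose

/-- `Herm₂(𝒜) = {B ∈ M₂(𝒜) : B = B*}`. -/
def Herm2 : Set M2A := {B | B = ctrans B}

/-- `SL₂(𝒜) = {B ∈ M₂(𝒜) : det B = 1}`. -/
def SL2A : Set M2A := {B | B.det = 1}

/-- The inclusion `M₂(ℝ) ⊆ M₂(𝒜)`. -/
def mR (C : Matrix (Fin 2) (Fin 2) ℝ) : M2A := C.map toA

/-! ### The complexified Lorentz numbers `𝒜_ℂ = 𝒜 ⊗ ℂ ≅ ℂ × ℂ` (split coordinates),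
and the quaternions `ℍ^{𝒜_ℂ}` with coefficients in `𝒜_ℂ`. -/

abbrev AC : Type := ℂ × ℂ

/-- `σ ∈ 𝒜_ℂ`. -/
def sC : AC := (1, -1)

/-- The complex unit `i ∈ 𝒜_ℂ`. -/
def iC : AC := (Complex.I, Complex.I)

/-- Conjugation `u + σ v ↦ u - σ v` (`u, v ∈ ℂ`) of `𝒜_ℂ`. -/
def hatC (z : AC) : AC := (z.2, z.1)

/-- The inclusion `ℝ ⊆ 𝒜_ℂ`. -/
def rc (t : ℝ) : AC := ((t : ℂ), (t : ℂ))

/-- The inclusion `𝒜 ⊆ 𝒜_ℂ`. -/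
def toAC (a : LorentzA) : AC := ((a.1 : ℂ), (a.2 : ℂ))

/-- `a ↦ i·a`, the image of `𝒜` in `i·𝒜 ⊆ 𝒜_ℂ`. -/
def iAC (a : LorentzA) : AC := (Complex.I * a.1, Complex.I * a.2)

/-- `ℍ^{𝒜_ℂ}`: quaternions `ζ₀·1 + ζ₁·I + ζ₂·J + ζ₃·K` with `ζᵢ ∈ 𝒜_ℂ`,
`I² = J² = K² = -1`, `IJ = -JI = K`. -/
abbrev HAC := Quaternion AC

/-- The scalar quaternion `z·1`. -/
def qscalar (z : AC) : HAC := ⟨z, 0, 0, 0⟩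

/-- The quaternion unit `I`. -/
def qI : HAC := ⟨0, 1, 0, 0⟩

/-- The quaternion unit `J`. -/
def qJ : HAC := ⟨0, 0, 1, 0⟩

/-- The quaternion unit `K`. -/
def qK : HAC := ⟨0, 0, 0, 1⟩

/-- `ζ̂`: apply `𝒜_ℂ`-conjugation to each coefficient of a quaternion.
(Quaternionic conjugation `ζ̄` is `star ζ`.) -/
def qhat (q : HAC) : HAC := ⟨hatC q.re, hatC q.imI, hatC q.imJ, hatC q.imK⟩

/-- `H(ζ, ζ') = ½(ζ ζ̄' + ζ' ζ̄) = ζ₀ζ₀' + ζ₁ζ₁' + ζ₂ζ₂' + ζ₃ζ₃' ∈ 𝒜_ℂ`. -/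
def Hform (q q' : HAC) : AC := q.re * q'.re + q.imI * q'.imI + q.imJ * q'.imJ + q.imK * q'.imK

/-- `p₀·1 + i p₁·I + p₂·J + i p₃·K` with `pᵢ ∈ 𝒜`: the generic element of `ℍ₀`. -/
def mk0 (p₀ p₁ p₂ p₃ : LorentzA) : HAC :=
  qscalar (toAC p₀) + qscalar (iAC p₁) * qI + qscalar (toAC p₂) * qJ + qscalar (iAC p₃) * qK

/-- `i q₀·1 + q₁·I + i q₂·J + q₃·K` with `qᵢ ∈ 𝒜`: the generic element of `ℍ₁`. -/
def mk1 (q₀ q₁ q₂ q₃ : LorentzA) : HAC :=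
  qscalar (iAC q₀) + qscalar (toAC q₁) * qI + qscalar (iAC q₂) * qJ + qscalar (toAC q₃) * qK

/-- `ℍ₀ = {p₀·1 + i p₁·I + p₂·J + i p₃·K : pᵢ ∈ 𝒜} ⊆ ℍ^{𝒜_ℂ}`. -/
def H0set : Set HAC := {ζ | ∃ p₀ p₁ p₂ p₃ : LorentzA, ζ = mk0 p₀ p₁ p₂ p₃}

/-- `ℍ₁ = {i q₀·1 + q₁·I + i q₂·J + q₃·K : qᵢ ∈ 𝒜} ⊆ ℍ^{𝒜_ℂ}`. -/
def H1set : Set HAC := {ζ | ∃ q₀ q₁ q₂ q₃ : LorentzA, ζ = mk1 q₀ q₁ q₂ q₃}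

/-- `Spin(2,2) = {p ∈ ℍ₀ : H(p,p) = 1}`. -/
def SpinSet : Set HAC := {p | p ∈ H0set ∧ Hform p p = 1}

/-- Extraction of the `𝒜`-coefficient of an element of `𝒜 ⊆ 𝒜_ℂ`. -/
def reEx (z : AC) : LorentzA := (z.1.re, z.2.re)

/-- Extraction of the `𝒜`-coefficient of an element of `i·𝒜 ⊆ 𝒜_ℂ`. -/
def imEx (z : AC) : LorentzA := (z.1.im, z.2.im)

/-- The map `A₀ : ℍ₀ → M₂(𝒜)`,
`p₀·1 + i p₁·I + p₂·J + i p₃·K ↦ [[p₀ - σp₁, p₂ - σp₃], [-p₂ - σp₃, p₀ + σp₁]]`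
(written via coefficient extraction, so that it is a total function on `ℍ^{𝒜_ℂ}`
agreeing with `A₀` on `ℍ₀`). -/
def A0 (ζ : HAC) : M2A :=
  !![reEx ζ.re - sA * imEx ζ.imI, reEx ζ.imJ - sA * imEx ζ.imK;
     -reEx ζ.imJ - sA * imEx ζ.imK, reEx ζ.re + sA * imEx ζ.imI]

/-- The map `A₁ : ℍ₁ → M₂(𝒜)`,
`i q₀·1 + q₁·I + i q₂·J + q₃·K ↦ [[-q₁ - σq₀, -q₃ - σq₂], [-q₃ + σq₂, q₁ - σq₀]]`. -/
def A1 (ζ : HAC) : M2A :=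
  !![-reEx ζ.imI - sA * imEx ζ.re, -reEx ζ.imK - sA * imEx ζ.imJ;
     -reEx ζ.imK + sA * imEx ζ.imJ, reEx ζ.imI - sA * imEx ζ.re]
@[simp] theorem qscalar_re (z : AC) : (qscalar z).re = z := rfl
@[simp] theorem qscalar_imI (z : AC) : (qscalar z).imI = 0 := rfl
@[simp] theorem qscalar_imJ (z : AC) : (qscalar z).imJ = 0 := rfl
@[simp] theorem qscalar_imK (z : AC) : (qscalar z).imK = 0 := rfl
@[simp] theorem qI_re : qI.re = 0 := rfl
@[simp] theorem qI_imI : qI.imI = 1 := rfl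
@[simp] theorem qI_imJ : qI.imJ = 0 := rfl
@[simp] theorem qI_imK : qI.imK = 0 := rfl
@[simp] theorem qJ_re : qJ.re = 0 := rfl
@[simp] theorem qJ_imI : qJ.imI = 0 := rfl
@[simp] theorem qJ_imJ : qJ.imJ = 1 := rfl
@[simp] theorem qJ_imK : qJ.imK = 0 := rfl
@[simp] theorem qK_re : qK.re = 0 := rfl
@[simp] theorem qK_imI : qK.imI = 0 := rfl
@[simp] theorem qK_imJ : qK.imJ = 0 := rfl
@[simp] theorem qK_imK : qK.imK = 1 := rfl

@[simp] theorem mk0_re (p₀ p₁ p₂ p₃ : LorentzA) : (mk0 p₀ p₁ p₂ p₃).re = toAC p₀ := by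
  simp [mk0]

@[simp] theorem mk0_imI (p₀ p₁ p₂ p₃ : LorentzA) : (mk0 p₀ p₁ p₂ p₃).imI = iAC p₁ := by
  simp [mk0]

@[simp] theorem mk0_imJ (p₀ p₁ p₂ p₃ : LorentzA) : (mk0 p₀ p₁ p₂ p₃).imJ = toAC p₂ := by
  simp [mk0]

@[simp] theorem mk0_imK (p₀ p₁ p₂ p₃ : LorentzA) : (mk0 p₀ p₁ p₂ p₃).imK = iAC p₃ := by
  simp [mk0]

theorem A0_mk0 (p₀ p₁ p₂ p₃ : LorentzA) : A0 (mk0 p₀ p₁ p₂ p₃) =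
      !![p₀ - sA * p₁, p₂ - sA * p₃; -p₂ - sA * p₃, p₀ + sA * p₁] := by
  simp [A0, reEx, imEx, toAC, iAC]

theorem mk0_add (p₀ p₁ p₂ p₃ q₀ q₁ q₂ q₃ : LorentzA) :
    mk0 p₀ p₁ p₂ p₃ + mk0 q₀ q₁ q₂ q₃ = mk0 (p₀ + q₀) (p₁ + q₁) (p₂ + q₂) (p₃ + q₃) := by
  apply Quaternion.ext <;> ext1 <;> simp [toAC, iAC, mul_add]

theorem mk0_mul (p₀ p₁ p₂ p₃ q₀ q₁ q₂ q₃ : LorentzA) :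
    mk0 p₀ p₁ p₂ p₃ * mk0 q₀ q₁ q₂ q₃ =
      mk0 (p₀ * q₀ + p₁ * q₁ - p₂ * q₂ + p₃ * q₃) (p₀ * q₁ + p₁ * q₀ + p₂ * q₃ - p₃ * q₂)
        (p₀ * q₂ + p₁ * q₃ + p₂ * q₀ - p₃ * q₁) (p₀ * q₃ + p₁ * q₂ - p₂ * q₁ + p₃ * q₀) := by
  apply Quaternion.ext <;> ext1 <;> simp [toAC, iAC] <;> grind [Complex.I_mul_I]

theorem sA_sq : sA * sA = 1 := by
  ext <;> simp [sA]

theorem mk0_smul (r : ℝ) (p₀ p₁ p₂ p₃ : LorentzA) :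
    r • mk0 p₀ p₁ p₂ p₃ = mk0 (r • p₀) (r • p₁) (r • p₂) (r • p₃) := by
  apply Quaternion.ext <;> ext1 <;> simp [toAC, iAC] <;> ring

/-- `A₀ : ℍ₀ → M₂(𝒜)`,
`p₀·1 + ip₁·I + p₂·J + ip₃·K ↦ [[p₀ - σp₁, p₂ - σp₃], [-p₂ - σp₃, p₀ + σp₁]]`,
is an isomorphism of real algebras (additive, multiplicative, unital, `ℝ`-homogeneous and a
bijection from `ℍ₀` onto `M₂(𝒜)`), and for every `p ∈ ℍ₀` one has `H(p,p) = det A₀(p)` and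
`A₀(hat (p̄)) = A₀(p)*`. -/
theorem stmt2 :
    (∀ p₀ p₁ p₂ p₃ : LorentzA, A0 (mk0 p₀ p₁ p₂ p₃) =
      !![p₀ - sA * p₁, p₂ - sA * p₃; -p₂ - sA * p₃, p₀ + sA * p₁]) ∧
    (∀ p ∈ H0set, ∀ q ∈ H0set, A0 (p + q) = A0 p + A0 q ∧ A0 (p * q) = A0 p * A0 q) ∧
    (∀ (r : ℝ), ∀ p ∈ H0set, A0 (r • p) = r • A0 p) ∧
    A0 1 = 1 ∧
    Set.BijOn A0 H0set Set.univ ∧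
    (∀ p ∈ H0set, toAC ((A0 p).det) = Hform p p ∧ A0 (qhat (star p)) = ctrans (A0 p)) := by
  refine ⟨A0_mk0, ?_, ?_, ?_, ⟨fun _ _ => Set.mem_univ _, ?_, ?_⟩, ?_⟩
  · rintro _ ⟨p₀, p₁, p₂, p₃, rfl⟩ _ ⟨q₀, q₁, q₂, q₃, rfl⟩
    constructor
    · rw [mk0_add]
      simp only [A0_mk0]
      refine Matrix.ext fun i j => ?_
      fin_cases i <;> fin_cases j <;> simp <;> ring
    · rw [mk0_mul]
      simp only [A0_mk0]
      refine Matrix.ext fun i j => ?_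
      fin_cases i <;> fin_cases j <;> ext1 <;>
        simp [Matrix.mul_apply, Fin.sum_univ_two, sA] <;> ring
  · rintro r _ ⟨p₀, p₁, p₂, p₃, rfl⟩
    rw [mk0_smul]
    simp only [A0_mk0]
    refine Matrix.ext fun i j => ?_
    fin_cases i <;> fin_cases j <;> simp [smul_sub, smul_add]
  · have h0 : (1 : HAC).re = 1 := rfl
    have h1 : (1 : HAC).imI = 0 := rfl
    have h2 : (1 : HAC).imJ = 0 := rfl
    have h3 : (1 : HAC).imK = 0 := rfl
    refine Matrix.ext fun i j => ?_
    fin_cases i <;> fin_cases j <;> ext1 <;>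
      simp [A0, reEx, imEx, sA, h0, h1, h2, h3]
  · rintro _ ⟨p₀, p₁, p₂, p₃, rfl⟩ _ ⟨q₀, q₁, q₂, q₃, rfl⟩ h
    simp only [A0_mk0] at h
    have h00 := congrFun (congrFun h 0) 0
    have h01 := congrFun (congrFun h 0) 1
    have h10 := congrFun (congrFun h 1) 0
    have h11 := congrFun (congrFun h 1) 1
    simp [sA, Prod.ext_iff] at h00 h01 h10 h11
    have e0 : p₀ = q₀ := by ext <;> linarith
    have e1 : p₁ = q₁ := by ext <;> linarith
    have e2 : p₂ = q₂ := by ext <;> linarith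
    have e3 : p₃ = q₃ := by ext <;> linarith
    subst e0 e1 e2 e3
    rfl
  · intro B _
    refine ⟨_, ⟨(2:ℝ)⁻¹ • (B 0 0 + B 1 1), (2:ℝ)⁻¹ • (sA * (B 1 1 - B 0 0)),
      (2:ℝ)⁻¹ • (B 0 1 - B 1 0), (2:ℝ)⁻¹ • (-sA * (B 0 1 + B 1 0)), rfl⟩, ?_⟩
    rw [A0_mk0]
    refine Matrix.ext fun i j => ?_
    fin_cases i <;> fin_cases j <;> ext <;> simp [sA] <;> ring
  · rintro _ ⟨p₀, p₁, p₂, p₃, rfl⟩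
    constructor
    · rw [A0_mk0, Matrix.det_fin_two]
      ext1 <;> simp [Hform, toAC, iAC, sA] <;> grind [Complex.I_mul_I]
    · rw [A0_mk0]
      refine Matrix.ext fun i j => ?_
      fin_cases i <;> fin_cases j <;> ext <;>
        simp [A0, qhat, hatC, reEx, imEx, toAC, iAC, sA, ctrans, conjA] <;> ring
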